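/- arXiv:1502.02799 — 2 statements merged into one kernel-verified Lean document; each statement's English description precedes it below -/
import Mathlib

section
/- Let Π be a CNF theory and V ⊆ 𝒜. Then Forget(Π, V) ≡ unfold(Π, V), where unfold(Π, V) is the iterated strong unfolding of Π with respect to the atoms of V (in any order). -/
variable {α : Type*} [Fintype α] [DecidableEq α]

/-- A clause (or term): a finite set of literals, where a literal is an atom
paired with a polarity (`true` = positive occurrence, `false` = negated). -/
abbrev Clause (α : Type*) := Finset (α × Bool)

/-- A finite set of literals is a legal clause/term if it contains no
complementary pair of literals. -/
def IsClause (c : Clause α) : Prop := ∀ p : α, ¬((p, true) ∈ c ∧ (p, false) ∈ c)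

instance : DecidablePred (IsClause (α := α)) := fun c =>
  decidable_of_iff (∀ p : α, ¬((p, true) ∈ c ∧ (p, false) ∈ c)) Iff.rfl

/-- The atoms occurring in a clause/term. -/
def varsC (c : Clause α) : Finset α := c.image Prod.fst

/-- The atoms occurring positively in a clause/term. -/
def posC (c : Clause α) : Finset α := (c.filter fun l => l.2 = true).image Prod.fst

/-- The atoms occurring negatively in a clause/term. -/
def negC (c : Clause α) : Finset α := (c.filter fun l => l.2 = false).image Prod.fst

/-- The resolvent of two clauses on atom `p`. -/
def res (c c' : Clause α) (p : α) : Clause α :=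
  (c ∪ c') \ ({(p, true), (p, false)} : Finset (α × Bool))

/-- `c` and `c'` are resolvable on atom `p`: `p` occurs in one of them and `¬p` in
the other, and the resolvent contains no complementary pair of literals. -/
def ResolvableOn (c c' : Clause α) (p : α) : Prop :=
  ((p, true) ∈ c ∧ (p, false) ∈ c' ∨ (p, false) ∈ c ∧ (p, true) ∈ c') ∧ IsClause (res c c' p)

/-- Renaming of a literal: flip the polarity of atoms in `V`. -/
def renLit (V : Finset α) (l : α × Bool) : α × Bool := if l.1 ∈ V then (l.1, !l.2) else l

/-- Renaming of a clause w.r.t. the atoms in `V`. -/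
def renClause (V : Finset α) (c : Clause α) : Clause α := c.image (renLit V)

/-- Renaming of a CNF theory w.r.t. the atoms in `V`. -/
def renTheory (V : Finset α) (T : Finset (Clause α)) : Finset (Clause α) := T.image (renClause V)

/-- A Horn clause: at most one positive literal. -/
def HornClause (c : Clause α) : Prop := (posC c).card ≤ 1

/-- A Horn theory: a finite set of Horn clauses. -/
def IsHornTheory (T : Finset (Clause α)) : Prop := ∀ c ∈ T, HornClause c

/-- A Krom theory: each clause contains at most 2 literals. -/
def IsKromTheory (T : Finset (Clause α)) : Prop := ∀ c ∈ T, c.card ≤ 2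

/-- `T` is Horn renamable: some renaming of `T` is a Horn theory. -/
def IsRenHorn (T : Finset (Clause α)) : Prop := ∃ V : Finset α, IsHornTheory (renTheory V T)

/-- The QH-conditions for sets of atoms `Q`, `H` and a clause `c`. -/
def QHcond (Q H : Finset α) (c : Clause α) : Prop :=
  (varsC c ∩ Q).card ≤ 2 ∧ (posC c ∩ H).card ≤ 1 ∧
    ((posC c ∩ H).card = 1 → varsC c ∩ Q = ∅)

/-- The atoms occurring in a CNF theory. -/
def varsT (T : Finset (Clause α)) : Finset α := T.sup varsC

/-- `T` has a QH-partition: a partition `{Q, H}` of its atoms satisfying the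
QH-conditions for each of its clauses. -/
def HasQHPartition (T : Finset (Clause α)) : Prop :=
  ∃ Q H : Finset α, Q ∩ H = ∅ ∧ Q ∪ H = varsT T ∧ ∀ c ∈ T, QHcond Q H c

/-- `T` is q-Horn: some renaming of `T` has a QH-partition. -/
def IsQHorn (T : Finset (Clause α)) : Prop := ∃ V : Finset α, HasQHPartition (renTheory V T)

/-- Satisfaction of a literal by an interpretation (a set of atoms). -/
def litSat (I : Set α) (l : α × Bool) : Prop := if l.2 then l.1 ∈ I else l.1 ∉ I

/-- Satisfaction of a clause (read disjunctively). -/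
def clauseSat (I : Set α) (c : Clause α) : Prop := ∃ l ∈ c, litSat I l

/-- Satisfaction of a term (read conjunctively). -/
def termSat (I : Set α) (t : Clause α) : Prop := ∀ l ∈ t, litSat I l

/-- Satisfaction of a CNF theory. -/
def cnfSat (I : Set α) (T : Finset (Clause α)) : Prop := ∀ c ∈ T, clauseSat I c

/-- One step of the resolution closure. -/
def resStep (S : Set (Clause α)) : Set (Clause α) :=
  S ∪ {d | ∃ c ∈ S, ∃ c' ∈ S, ∃ p : α, ResolvableOn c c' p ∧ d = res c c' p}

/-- The iterated resolution closure `res^n_T`. -/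
def resIter (T : Finset (Clause α)) : ℕ → Set (Clause α)
  | 0 => (↑T : Set (Clause α))
  | n + 1 => resStep (resIter T n)

/-- Propositional formulas over atoms `α`. -/
inductive PropForm (α : Type*) where
  | var : α → PropForm α
  | tru : PropForm α
  | fls : PropForm α
  | neg : PropForm α → PropForm α
  | conj : PropForm α → PropForm α → PropForm α
  | disj : PropForm α → PropForm α → PropForm α

namespace PropForm

/-- Satisfaction of a formula by an interpretation. -/
def Sat (I : Set α) : PropForm α → Prop
  | var p => p ∈ I
  | tru => True
  | fls => False
  | neg φ => ¬ Sat I φ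
  | conj φ ψ => Sat I φ ∧ Sat I ψ
  | disj φ ψ => Sat I φ ∨ Sat I ψ

/-- Logical equivalence: same models. -/
def equivalent (φ ψ : PropForm α) : Prop := ∀ I : Set α, Sat I φ ↔ Sat I ψ

/-- Entailment: every model of `φ` is a model of `ψ`. -/
def entails (φ ψ : PropForm α) : Prop := ∀ I : Set α, Sat I φ → Sat I ψ

/-- The atoms occurring in a formula. -/
def vars : PropForm α → Finset α
  | var p => {p}
  | tru => ∅
  | fls => ∅
  | neg φ => vars φ
  | conj φ ψ => vars φ ∪ vars ψ
  | disj φ ψ => vars φ ∪ vars ψ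

/-- Substitution of the formula `χ` for the atom `p`. -/
def subst (p : α) (χ : PropForm α) : PropForm α → PropForm α
  | var q => if q = p then χ else var q
  | tru => tru
  | fls => fls
  | neg φ => neg (subst p χ φ)
  | conj φ ψ => conj (subst p χ φ) (subst p χ ψ)
  | disj φ ψ => disj (subst p χ φ) (subst p χ ψ)

/-- Forgetting a single atom: `Forget(φ, {p}) = φ[p/⊤] ∨ φ[p/⊥]`. -/
def forget1 (φ : PropForm α) (p : α) : PropForm α := disj (subst p tru φ) (subst p fls φ)

/-- Forgetting a set of atoms (presented as a list), one atom at a time: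
`Forget(φ, ∅) = φ` and `Forget(φ, V ∪ {p}) = Forget(Forget(φ, {p}), V)`. -/
def Forget : PropForm α → List α → PropForm α
  | φ, [] => φ
  | φ, p :: V => Forget (forget1 φ p) V

/-- Renaming of a formula: replace each occurrence of an atom `p ∈ V` by `¬p`. -/
def renForm (V : Finset α) : PropForm α → PropForm α
  | var p => if p ∈ V then neg (var p) else var p
  | tru => tru
  | fls => fls
  | neg φ => neg (renForm V φ)
  | conj φ ψ => conj (renForm V φ) (renForm V ψ)
  | disj φ ψ => disj (renForm V φ) (renForm V ψ)

/-- `φ` is irrelevant to the atoms in `V`: it is equivalent to a formula not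
mentioning any atom of `V`. -/
def IR (φ : PropForm α) (V : List α) : Prop :=
  ∃ φ' : PropForm α, equivalent φ φ' ∧ ∀ p ∈ V, p ∉ vars φ'

end PropForm

/-- The formula corresponding to a literal. -/
def litToForm (l : α × Bool) : PropForm α :=
  if l.2 then PropForm.var l.1 else PropForm.neg (PropForm.var l.1)

/-- The disjunction of the literals of a clause. -/
noncomputable def clauseToForm (c : Clause α) : PropForm α :=
  c.toList.foldr (fun l φ => PropForm.disj (litToForm l) φ) PropForm.fls

/-- The conjunction of the clauses of a CNF theory. -/
noncomputable def cnfToForm (T : Finset (Clause α)) : PropForm α :=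
  T.toList.foldr (fun c φ => PropForm.conj (clauseToForm c) φ) PropForm.tru

/-- `φ` is Horn expressible. -/
def HornExpressible (φ : PropForm α) : Prop :=
  ∃ T : Finset (Clause α), (∀ c ∈ T, IsClause c) ∧ IsHornTheory T ∧
    PropForm.equivalent φ (cnfToForm T)

/-- `φ` is Krom expressible. -/
def KromExpressible (φ : PropForm α) : Prop :=
  ∃ T : Finset (Clause α), (∀ c ∈ T, IsClause c) ∧ IsKromTheory T ∧
    PropForm.equivalent φ (cnfToForm T)

/-- `φ` is renamable-Horn expressible. -/
def RenHornExpressible (φ : PropForm α) : Prop :=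
  ∃ T : Finset (Clause α), (∀ c ∈ T, IsClause c) ∧ IsRenHorn T ∧
    PropForm.equivalent φ (cnfToForm T)

/-- `φ` is q-Horn expressible. -/
def QHornExpressible (φ : PropForm α) : Prop :=
  ∃ T : Finset (Clause α), (∀ c ∈ T, IsClause c) ∧ IsQHorn T ∧
    PropForm.equivalent φ (cnfToForm T)

/-- A formula entails a clause. -/
def EntailsClause (φ : PropForm α) (c : Clause α) : Prop :=
  ∀ I : Set α, PropForm.Sat I φ → clauseSat I c

/-- A prime implicate of a formula. -/
def IsPrimeImplicate (φ : PropForm α) (c : Clause α) : Prop :=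
  IsClause c ∧ EntailsClause φ c ∧ ∀ c' ⊂ c, ¬ EntailsClause φ c'

/-- A term entails a formula. -/
def TermEntails (t : Clause α) (φ : PropForm α) : Prop :=
  ∀ I : Set α, termSat I t → PropForm.Sat I φ

/-- A prime implicant of a formula. -/
def IsPrimeImplicant (φ : PropForm α) (t : Clause α) : Prop :=
  IsClause t ∧ TermEntails t φ ∧ ∀ t' ⊂ t, ¬ TermEntails t' φ

/-- A CNF theory entails a clause. -/
def TheoryEntailsClause (T : Finset (Clause α)) (c : Clause α) : Prop :=
  ∀ I : Set α, cnfSat I T → clauseSat I c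

/-- A prime implicate of a CNF theory. -/
def IsPrimeImplicateT (T : Finset (Clause α)) (c : Clause α) : Prop :=
  IsClause c ∧ TheoryEntailsClause T c ∧ ∀ c' ⊂ c, ¬ TheoryEntailsClause T c'

/-- The set of prime implicates of a CNF theory, as a finite theory. -/
noncomputable def PI (T : Finset (Clause α)) : Finset (Clause α) :=
  (Set.toFinite {c : Clause α | IsPrimeImplicateT T c}).toFinset

/-- Strong unfolding of a CNF theory w.r.t. an atom `p`: keep the clauses not
mentioning `p`, and replace the clauses containing the positive literal `p` by all
their resolvents with clauses containing `¬p`; clauses containing `¬p` are removed. -/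
def unfold1 (T : Finset (Clause α)) (p : α) : Finset (Clause α) :=
  T.filter (fun c => (p, true) ∉ c ∧ (p, false) ∉ c) ∪
    ((T ×ˢ T).filter fun cc =>
        (p, true) ∈ cc.1 ∧ (p, false) ∈ cc.2 ∧ IsClause (res cc.1 cc.2 p)).image
      fun cc => res cc.1 cc.2 p

/-- Iterated strong unfolding w.r.t. a set of atoms (presented as a list):
`unfold(T, ∅) = T` and `unfold(T, V ∪ {p}) = unfold(unfold(T, p), V)`. -/
def unfoldList (T : Finset (Clause α)) : List α → Finset (Clause α)
  | [] => T
  | p :: V => unfoldList (unfold1 T p) V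

/-!
Forgetting `p` asks for a model after `p` has been made true or false. Making `p` true satisfies
the clauses containing `p` and shrinks every other clause to its `p`-free part; dually for `p`
false. Distributing the disjunction of these two conjunctions leaves one condition per pair of
clauses: the pairs `c ∋ p`, `c' ∋ ¬p` give the resolvents, the `p`-free clauses paired with
themselves give the clauses kept by unfolding, and all other pairs are trivial or implied by these.
The resolvents that unfolding discards are tautologies, so dropping them is harmless.
-/

namespace PropForm

section
omit [Fintype α] [DecidableEq α]

theorem sat_foldr_conj {β : Type*} (I : Set α) (f : β → PropForm α) (L : List β) :
    Sat I (L.foldr (fun b φ => conj (f b) φ) tru) ↔ ∀ b ∈ L, Sat I (f b) := by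
  induction L with
  | nil => simp [Sat]
  | cons b L ih => simp [Sat, ih]

theorem sat_foldr_disj {β : Type*} (I : Set α) (f : β → PropForm α) (L : List β) :
    Sat I (L.foldr (fun b φ => disj (f b) φ) fls) ↔ ∃ b ∈ L, Sat I (f b) := by
  induction L with
  | nil => simp [Sat]
  | cons b L ih => simp [Sat, ih]

end

section
omit [Fintype α]

theorem sat_subst (I : Set α) (p : α) (χ φ : PropForm α) :
    Sat I (subst p χ φ) ↔ Sat {q | if q = p then Sat I χ else q ∈ I} φ := by
  induction φ with
  | var q => by_cases h : q = p <;> simp [subst, Sat, h]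
  | _ => simp_all [subst, Sat]

theorem sat_subst_tru (I : Set α) (p : α) (φ : PropForm α) :
    Sat I (subst p tru φ) ↔ Sat (insert p I) φ := by
  have hset : {q | if q = p then Sat I tru else q ∈ I} = insert p I := by
    ext q; by_cases h : q = p <;> simp [Sat, h]
  rw [sat_subst, hset]

theorem sat_subst_fls (I : Set α) (p : α) (φ : PropForm α) :
    Sat I (subst p fls φ) ↔ Sat (I \ {p}) φ := by
  have hset : {q | if q = p then Sat I fls else q ∈ I} = I \ {p} := by
    ext q; by_cases h : q = p <;> simp [Sat, h]
  rw [sat_subst, hset]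

theorem sat_forget1 (I : Set α) (p : α) (φ : PropForm α) :
    Sat I (forget1 φ p) ↔ Sat (insert p I) φ ∨ Sat (I \ {p}) φ :=
  or_congr (sat_subst_tru I p φ) (sat_subst_fls I p φ)

theorem equivalent.forget1 {φ ψ : PropForm α} (h : equivalent φ ψ) (p : α) :
    equivalent (forget1 φ p) (forget1 ψ p) := fun I => by
  rw [sat_forget1, sat_forget1, h, h]

theorem equivalent.forget {φ ψ : PropForm α} (h : equivalent φ ψ) (V : List α) :
    equivalent (Forget φ V) (Forget ψ V) := by
  induction V generalizing φ ψ with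
  | nil => exact h
  | cons p _ ih => exact ih (h.forget1 p)

end

end PropForm

section
omit [Fintype α] [DecidableEq α]

theorem sat_litToForm (I : Set α) (l : α × Bool) :
    PropForm.Sat I (litToForm l) ↔ litSat I l := by
  obtain ⟨q, _ | _⟩ := l <;> simp [litToForm, litSat, PropForm.Sat]

theorem sat_clauseToForm (I : Set α) (c : Clause α) :
    PropForm.Sat I (clauseToForm c) ↔ clauseSat I c := by
  simp only [clauseToForm, PropForm.sat_foldr_disj, sat_litToForm, Finset.mem_toList, clauseSat]

theorem sat_cnfToForm (I : Set α) (T : Finset (Clause α)) :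
    PropForm.Sat I (cnfToForm T) ↔ cnfSat I T := by
  simp only [cnfToForm, PropForm.sat_foldr_conj, sat_clauseToForm, Finset.mem_toList, cnfSat]

theorem litSat_insert (I : Set α) (p : α) (l : α × Bool) :
    litSat (insert p I) l ↔ l = (p, true) ∨ l.1 ≠ p ∧ litSat I l := by
  obtain ⟨q, _ | _⟩ := l <;> by_cases h : q = p <;> simp [litSat, h]

theorem litSat_diff_singleton (I : Set α) (p : α) (l : α × Bool) :
    litSat (I \ {p}) l ↔ l = (p, false) ∨ l.1 ≠ p ∧ litSat I l := by
  obtain ⟨q, _ | _⟩ := l <;> by_cases h : q = p <;> simp [litSat, h]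

theorem clauseSat_of_not_isClause {c : Clause α} (I : Set α) (hc : ¬ IsClause c) :
    clauseSat I c := by
  obtain ⟨p, hpos, hneg⟩ : ∃ p, (p, true) ∈ c ∧ (p, false) ∈ c := by
    simpa only [IsClause, not_forall, not_not] using hc
  by_cases hp : p ∈ I
  · exact ⟨_, hpos, by simpa [litSat] using hp⟩
  · exact ⟨_, hneg, by simpa [litSat] using hp⟩

end

section
omit [Fintype α]

/-- The part of a clause not mentioning the atom `p`: what remains to be satisfied once a value
of `p` falsifying its literals has been fixed. -/
def eraseAtom (c : Clause α) (p : α) : Clause α := c.filter fun l => l.1 ≠ p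

theorem eraseAtom_eq_self {c : Clause α} {p : α} (hpos : (p, true) ∉ c) (hneg : (p, false) ∉ c) :
    eraseAtom c p = c := by
  refine Finset.filter_true_of_mem ?_
  rintro ⟨q, _ | _⟩ hl rfl
  exacts [hneg hl, hpos hl]

theorem res_eq_union_eraseAtom (c c' : Clause α) (p : α) :
    res c c' p = eraseAtom c p ∪ eraseAtom c' p := by
  ext ⟨q, _ | _⟩ <;> simp [res, eraseAtom, or_and_right]

theorem clauseSat_union (I : Set α) (c c' : Clause α) :
    clauseSat I (c ∪ c') ↔ clauseSat I c ∨ clauseSat I c' := by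
  simp only [clauseSat, Finset.mem_union, or_and_right, exists_or]

theorem clauseSat_res (I : Set α) (c c' : Clause α) (p : α) :
    clauseSat I (res c c' p) ↔ clauseSat I (eraseAtom c p) ∨ clauseSat I (eraseAtom c' p) := by
  rw [res_eq_union_eraseAtom, clauseSat_union]

theorem clauseSat_insert (I : Set α) (p : α) (c : Clause α) :
    clauseSat (insert p I) c ↔ (p, true) ∈ c ∨ clauseSat I (eraseAtom c p) := by
  simp only [clauseSat, litSat_insert, eraseAtom, Finset.mem_filter, and_or_left, exists_or,
    exists_eq_right, and_assoc]

theorem clauseSat_diff_singleton (I : Set α) (p : α) (c : Clause α) :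
    clauseSat (I \ {p}) c ↔ (p, false) ∈ c ∨ clauseSat I (eraseAtom c p) := by
  simp only [clauseSat, litSat_diff_singleton, eraseAtom, Finset.mem_filter, and_or_left,
    exists_or, exists_eq_right, and_assoc]

theorem cnfSat_insert_or_diff_singleton (I : Set α) (p : α) (T : Finset (Clause α)) :
    cnfSat (insert p I) T ∨ cnfSat (I \ {p}) T ↔
      ∀ c ∈ T, ∀ c' ∈ T, ((p, true) ∈ c' ∨ clauseSat I (eraseAtom c' p)) ∨
        ((p, false) ∈ c ∨ clauseSat I (eraseAtom c p)) := by
  simp only [cnfSat, clauseSat_insert, clauseSat_diff_singleton]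
  grind

end

theorem mem_unfold1 {T : Finset (Clause α)} {p : α} {d : Clause α} :
    d ∈ unfold1 T p ↔ (d ∈ T ∧ (p, true) ∉ d ∧ (p, false) ∉ d) ∨
      ∃ c ∈ T, ∃ c' ∈ T, (p, true) ∈ c ∧ (p, false) ∈ c' ∧ IsClause (res c c' p) ∧
        res c c' p = d := by
  simp only [unfold1, Finset.mem_union, Finset.mem_filter, Finset.mem_image, Finset.mem_product,
    Prod.exists]
  grind

theorem isClause_of_mem_unfold1 {T : Finset (Clause α)} (hT : ∀ c ∈ T, IsClause c) {p : α}
    {d : Clause α} (hd : d ∈ unfold1 T p) : IsClause d := by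
  obtain ⟨hdT, -⟩ | ⟨_, _, _, _, _, _, hres, rfl⟩ := mem_unfold1.mp hd
  exacts [hT d hdT, hres]

theorem cnfSat_unfold1_iff_forall_res (I : Set α) (T : Finset (Clause α)) (p : α) :
    cnfSat I (unfold1 T p) ↔
      (∀ c ∈ T, (p, true) ∉ c → (p, false) ∉ c → clauseSat I c) ∧
        ∀ c ∈ T, ∀ c' ∈ T, (p, true) ∈ c → (p, false) ∈ c' → clauseSat I (res c c' p) := by
  constructor
  · refine fun h => ⟨fun c hc hpos hneg => h c (mem_unfold1.mpr (.inl ⟨hc, hpos, hneg⟩)), ?_⟩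
    intro c hc c' hc' hpos hneg
    by_cases hres : IsClause (res c c' p)
    · exact h _ (mem_unfold1.mpr (.inr ⟨c, hc, c', hc', hpos, hneg, hres, rfl⟩))
    · exact clauseSat_of_not_isClause I hres
  · rintro ⟨hfree, hres⟩ d hd
    obtain ⟨hdT, hpos, hneg⟩ | ⟨c, hc, c', hc', hpos, hneg, -, rfl⟩ := mem_unfold1.mp hd
    · exact hfree d hdT hpos hneg
    · exact hres c hc c' hc' hpos hneg

theorem cnfSat_unfold1 {T : Finset (Clause α)} (hT : ∀ c ∈ T, IsClause c) (I : Set α) (p : α) :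
    cnfSat I (unfold1 T p) ↔ cnfSat (insert p I) T ∨ cnfSat (I \ {p}) T := by
  rw [cnfSat_unfold1_iff_forall_res, cnfSat_insert_or_diff_singleton]
  constructor
  · rintro ⟨hfree, hres⟩ c hc c' hc'
    by_contra! ⟨⟨hpos', hunsat'⟩, hneg, hunsat⟩
    have hpos : (p, true) ∈ c := by
      by_contra hpos
      exact hunsat ((eraseAtom_eq_self hpos hneg).symm ▸ hfree c hc hpos hneg)
    have hneg' : (p, false) ∈ c' := by
      by_contra hneg'
      exact hunsat' ((eraseAtom_eq_self hpos' hneg').symm ▸ hfree c' hc' hpos' hneg')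
    exact ((clauseSat_res I c c' p).mp (hres c hc c' hc' hpos hneg')).elim hunsat hunsat'
  · refine fun hpair => ⟨fun c hc hpos hneg => ?_, fun c hc c' hc' hpos hneg' => ?_⟩
    · have hsat := hpair c hc c hc
      rw [eraseAtom_eq_self hpos hneg] at hsat
      tauto
    · have hneg : (p, false) ∉ c := fun hneg => hT c hc p ⟨hpos, hneg⟩
      have hpos' : (p, true) ∉ c' := fun hpos' => hT c' hc' p ⟨hpos', hneg'⟩
      have hsat := hpair c hc c' hc'
      rw [clauseSat_res]
      tauto

theorem forget1_equiv_unfold1 {T : Finset (Clause α)} (hT : ∀ c ∈ T, IsClause c) (p : α) :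
    PropForm.equivalent (PropForm.forget1 (cnfToForm T) p) (cnfToForm (unfold1 T p)) := fun I => by
  simp only [PropForm.sat_forget1, sat_cnfToForm, cnfSat_unfold1 hT]

/-- `Forget(Π, V) ≡ unfold(Π, V)` for a CNF theory `Π`. -/
theorem forget_equiv_unfoldList
    (T : Finset (Clause α)) (hT : ∀ c ∈ T, IsClause c) (V : List α) :
    PropForm.equivalent (PropForm.Forget (cnfToForm T) V)
      (cnfToForm (unfoldList T V)) := by
  induction V generalizing T with
  | nil => exact fun _ => Iff.rfl
  | cons p V ih =>
    have hstep := (forget1_equiv_unfold1 hT p).forget V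
    have htail := ih (unfold1 T p) fun _ => isClause_of_mem_unfold1 hT
    exact fun I => (hstep I).trans (htail I)
end

section
/- Let Σ be a CNF theory and V ⊆ 𝒜. If Σ is a Horn theory (respectively: a Krom theory, a Horn renamable theory, a q-Horn theory), then unfold(Σ, V) is a Horn theory (respectively: a Krom theory, a Horn renamable theory, a q-Horn theory). -/
variable {α : Type*} [Fintype α] [DecidableEq α]

/-!
All four fragments are instances of one condition. For a fixed set `Q` of atoms, the clauses
satisfying the QH-conditions for `Q` and its complement are closed under resolution. If the atom
`p` resolved upon lies in `Q`, then neither parent has a positive literal outside `Q`, and each of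
them brings at most one further atom of `Q` into the resolvent. If `p` lies outside `Q`, then it is
the only positive literal outside `Q` of the parent containing it positively, and this parent has
no atom in `Q`; hence the resolvent meets the conditions because the other parent does.

Horn clauses are the case `Q = ∅`, Krom clauses the case where `Q` contains all atoms in question,
and resolution commutes with renaming, so that one renaming serves a theory and all its unfoldings.
-/

section Resolution

omit [Fintype α]

variable {c c' : Clause α} {p q : α}

theorem mem_posC : q ∈ posC c ↔ (q, true) ∈ c := by
  simp [posC]

theorem mem_varsC : q ∈ varsC c ↔ (q, true) ∈ c ∨ (q, false) ∈ c := by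
  simp [varsC, or_comm]

theorem mem_varsC_of_mem {b : Bool} (h : (q, b) ∈ c) : q ∈ varsC c :=
  Finset.mem_image_of_mem Prod.fst h

theorem posC_subset_varsC (c : Clause α) : posC c ⊆ varsC c :=
  Finset.image_subset_image (Finset.filter_subset _ _)

theorem varsC_subset_varsT {T : Finset (Clause α)} (hc : c ∈ T) : varsC c ⊆ varsT T :=
  Finset.le_sup (f := varsC) hc

theorem IsClause.card_varsC (hc : IsClause c) : (varsC c).card = c.card := by
  refine Finset.card_image_of_injOn ?_
  rintro ⟨q, b⟩ hb ⟨_, d⟩ hd rfl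
  have := hc q
  cases b <;> cases d <;> simp_all

theorem mem_res {l : α × Bool} : l ∈ res c c' p ↔ (l ∈ c ∨ l ∈ c') ∧ l.1 ≠ p := by
  obtain ⟨q, b⟩ := l
  cases b <;> simp [res]

theorem res_comm (c c' : Clause α) (p : α) : res c c' p = res c' c p := by
  simp only [res, Finset.union_comm]

theorem posC_res (c c' : Clause α) (p : α) :
    posC (res c c' p) = (posC c ∪ posC c').erase p := by
  ext q
  simp [mem_posC, mem_res, and_comm]

theorem varsC_res (c c' : Clause α) (p : α) :
    varsC (res c c' p) = (varsC c ∪ varsC c').erase p := by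
  ext q
  simp only [mem_varsC, mem_res, Finset.mem_erase, Finset.mem_union]
  tauto

end Resolution

section Renaming

omit [Fintype α]

variable {c c' : Clause α} {p : α}

theorem mem_renClause {V : Finset α} {q : α} {b : Bool} :
    (q, b) ∈ renClause V c ↔ (q, if q ∈ V then !b else b) ∈ c := by
  rw [renClause, Finset.mem_image]
  constructor
  · rintro ⟨⟨r, d⟩, h, e⟩
    by_cases hr : r ∈ V <;> simp only [renLit, hr, if_true, if_false, Prod.mk.injEq] at e <;>
      obtain ⟨rfl, rfl⟩ := e <;> simpa [hr] using h
  · intro h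
    refine ⟨_, h, ?_⟩
    by_cases hq : q ∈ V <;> simp [renLit, hq]

theorem renClause_res (V : Finset α) (c c' : Clause α) (p : α) :
    renClause V (res c c' p) = res (renClause V c) (renClause V c') p := by
  ext ⟨q, b⟩
  simp [mem_renClause, mem_res]

theorem IsClause.renClause (V : Finset α) (hc : IsClause c) : IsClause (renClause V c) := by
  intro q
  simp only [mem_renClause, Bool.not_true, Bool.not_false]
  by_cases hq : q ∈ V
  · simpa only [hq, if_true, and_comm] using hc q
  · simpa only [hq, if_false] using hc q

theorem ResolvableOn.renClause (V : Finset α) (h : ResolvableOn c c' p) :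
    ResolvableOn (renClause V c) (renClause V c') p := by
  refine ⟨?_, renClause_res V c c' p ▸ h.2.renClause V⟩
  simp only [mem_renClause, Bool.not_true, Bool.not_false]
  by_cases hp : p ∈ V
  · simpa only [hp, if_true] using h.1.symm
  · simpa only [hp, if_false] using h.1

end Renaming

section ClosedUnderRes

/-- A property of clauses is closed under resolution if every resolvent of two resolvable clauses
with the property has it too. Any such property of all clauses of a theory survives unfolding. -/
def ClosedUnderRes (P : Clause α → Prop) : Prop :=
  ∀ ⦃c c' : Clause α⦄ ⦃p : α⦄, ResolvableOn c c' p → P c → P c' → P (res c c' p)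

variable {P : Clause α → Prop}

omit [Fintype α] in
theorem ClosedUnderRes.comp_renClause (hP : ClosedUnderRes P) (V : Finset α) :
    ClosedUnderRes fun c => P (renClause V c) := by
  intro c c' p h hc hc'
  rw [renClause_res]
  exact hP (h.renClause V) hc hc'

theorem ClosedUnderRes.forall_mem_unfold1 (hP : ClosedUnderRes P) {T : Finset (Clause α)}
    (hT : ∀ c ∈ T, P c) (p : α) : ∀ c ∈ unfold1 T p, P c := by
  intro d hd
  simp only [unfold1, Finset.mem_union, Finset.mem_filter, Finset.mem_image, Finset.mem_product,
    Prod.exists] at hd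
  rcases hd with ⟨hd, -⟩ | ⟨c, c', ⟨⟨hc, hc'⟩, hp, hp', hres⟩, rfl⟩
  · exact hT d hd
  · exact hP ⟨Or.inl ⟨hp, hp'⟩, hres⟩ (hT c hc) (hT c' hc')

theorem ClosedUnderRes.forall_mem_unfoldList (hP : ClosedUnderRes P) {T : Finset (Clause α)}
    (hT : ∀ c ∈ T, P c) (V : List α) : ∀ c ∈ unfoldList T V, P c := by
  induction V generalizing T with
  | nil => exact hT
  | cons p _ ih => exact ih (hP.forall_mem_unfold1 hT p)

end ClosedUnderRes

section QHConditions

section Fragments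

omit [Fintype α]

variable {Q Q' H H' : Finset α} {c c' d : Clause α} {p : α}

theorem QHcond.mono (h : QHcond Q H c) (hQ : varsC d ∩ Q' ⊆ varsC c ∩ Q)
    (hH : posC d ∩ H' ⊆ posC c ∩ H) : QHcond Q' H' d := by
  obtain ⟨hvars, hpos, hexcl⟩ := h
  refine ⟨(Finset.card_le_card hQ).trans hvars, (Finset.card_le_card hH).trans hpos, fun hd => ?_⟩
  have hc : (posC c ∩ H).card = 1 := hpos.antisymm (hd ▸ Finset.card_le_card hH)
  exact Finset.subset_empty.1 (hexcl hc ▸ hQ)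

theorem QHcond.varsC_inter_eq_empty (h : QHcond Q H c) (hp : p ∈ posC c) (hpH : p ∈ H) :
    varsC c ∩ Q = ∅ :=
  h.2.2 (h.2.1.antisymm (Finset.card_pos.2 ⟨p, Finset.mem_inter.2 ⟨hp, hpH⟩⟩))

theorem QHcond.posC_inter_eq_empty (h : QHcond Q H c) (hp : p ∈ varsC c) (hpQ : p ∈ Q) :
    posC c ∩ H = ∅ := by
  by_contra hne
  obtain ⟨q, hq⟩ := Finset.nonempty_iff_ne_empty.2 hne
  obtain ⟨hqc, hqH⟩ := Finset.mem_inter.1 hq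
  have hempty := h.varsC_inter_eq_empty hqc hqH
  exact Finset.notMem_empty p (hempty ▸ Finset.mem_inter.2 ⟨hp, hpQ⟩)

theorem QHcond.res_of_mem_Q (hc : QHcond Q H c) (hc' : QHcond Q H c') (hp : p ∈ varsC c)
    (hp' : p ∈ varsC c') (hpQ : p ∈ Q) : QHcond Q H (res c c' p) := by
  have hpos : posC (res c c' p) ∩ H = ∅ := by
    rw [posC_res, Finset.erase_inter, Finset.union_inter_distrib_right,
      hc.posC_inter_eq_empty hp hpQ, hc'.posC_inter_eq_empty hp' hpQ]
    rfl
  have card_erase_le {d : Clause α} (hd : QHcond Q H d) (hpd : p ∈ varsC d) :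
      ((varsC d ∩ Q).erase p).card ≤ 1 := by
    rw [Finset.card_erase_of_mem (Finset.mem_inter.2 ⟨hpd, hpQ⟩)]
    exact Nat.sub_le_sub_right hd.1 1
  refine ⟨?_, by simp [hpos], by simp [hpos]⟩
  calc (varsC (res c c' p) ∩ Q).card
      = ((varsC c ∩ Q).erase p ∪ (varsC c' ∩ Q).erase p).card := by
        rw [varsC_res, Finset.erase_inter, Finset.union_inter_distrib_right,
          Finset.erase_union_distrib]
    _ ≤ ((varsC c ∩ Q).erase p).card + ((varsC c' ∩ Q).erase p).card := Finset.card_union_le _ _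
    _ ≤ 2 := Nat.add_le_add (card_erase_le hc hp) (card_erase_le hc' hp')

theorem QHcond.res_of_mem_H (hc : QHcond Q H c) (hc' : QHcond Q H c') (hp : p ∈ posC c)
    (hpH : p ∈ H) : QHcond Q H (res c c' p) := by
  refine hc'.mono ?_ ?_
  · rw [varsC_res, Finset.erase_inter, Finset.union_inter_distrib_right,
      hc.varsC_inter_eq_empty hp hpH, Finset.empty_union]
    exact Finset.erase_subset _ _
  · have hsingle : posC c ∩ H ⊆ {p} := fun q hq =>
      Finset.mem_singleton.2 <|
        Finset.card_le_one.1 hc.2.1 q hq p (Finset.mem_inter.2 ⟨hp, hpH⟩)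
    rw [posC_res, Finset.erase_inter, Finset.union_inter_distrib_right,
      ← Finset.subset_insert_iff, Finset.insert_eq]
    exact Finset.union_subset_union hsingle subset_rfl

theorem QHcond.res_of_mem_union (h : ResolvableOn c c' p) (hc : QHcond Q H c)
    (hc' : QHcond Q H c') (hp : p ∈ Q ∪ H) : QHcond Q H (res c c' p) := by
  rcases Finset.mem_union.1 hp with hpQ | hpH
  · rcases h.1 with ⟨hpc, hpc'⟩ | ⟨hpc, hpc'⟩ <;>
      exact hc.res_of_mem_Q hc' (mem_varsC_of_mem hpc) (mem_varsC_of_mem hpc') hpQ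
  · rcases h.1 with ⟨hpc, -⟩ | ⟨-, hpc'⟩
    · exact hc.res_of_mem_H hc' (mem_posC.2 hpc) hpH
    · rw [res_comm]
      exact hc'.res_of_mem_H hc (mem_posC.2 hpc') hpH

theorem qhcond_empty_left (hH : posC c ⊆ H) : QHcond ∅ H c ↔ HornClause c := by
  simp [QHcond, HornClause, Finset.inter_eq_left.2 hH]

theorem IsClause.qhcond_empty_right (hc : IsClause c) (hQ : varsC c ⊆ Q) :
    QHcond Q ∅ c ↔ c.card ≤ 2 := by
  simp [QHcond, Finset.inter_eq_left.2 hQ, hc.card_varsC]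

theorem closedUnderRes_hornClause : ClosedUnderRes (HornClause (α := α)) := by
  intro c c' p h hc hc'
  let H := posC c ∪ posC c'
  have hpH : p ∈ H := by
    rcases h.1 with ⟨hp, -⟩ | ⟨-, hp⟩
    · exact Finset.mem_union_left _ (mem_posC.2 hp)
    · exact Finset.mem_union_right _ (mem_posC.2 hp)
  have hres : QHcond ∅ H (res c c' p) := QHcond.res_of_mem_union h
    ((qhcond_empty_left Finset.subset_union_left).2 hc)
    ((qhcond_empty_left Finset.subset_union_right).2 hc') (Finset.mem_union_right _ hpH)
  exact (qhcond_empty_left (posC_res c c' p ▸ Finset.erase_subset _ _)).1 hres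

theorem closedUnderRes_isClause_and_card_le_two :
    ClosedUnderRes fun c : Clause α => IsClause c ∧ c.card ≤ 2 := by
  rintro c c' p h ⟨hc, hcard⟩ ⟨hc', hcard'⟩
  let Q := varsC c ∪ varsC c'
  have hpQ : p ∈ Q := by
    rcases h.1 with ⟨hp, -⟩ | ⟨hp, -⟩ <;> exact Finset.mem_union_left _ (mem_varsC_of_mem hp)
  have hres : QHcond Q ∅ (res c c' p) := QHcond.res_of_mem_union h
    ((hc.qhcond_empty_right Finset.subset_union_left).2 hcard)
    ((hc'.qhcond_empty_right Finset.subset_union_right).2 hcard') (Finset.mem_union_left _ hpQ)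
  exact ⟨h.2, (h.2.qhcond_empty_right (varsC_res c c' p ▸ Finset.erase_subset _ _)).1 hres⟩

theorem isRenHorn_iff {T : Finset (Clause α)} :
    IsRenHorn T ↔ ∃ W : Finset α, ∀ c ∈ T, HornClause (renClause W c) := by
  simp only [IsRenHorn, IsHornTheory, renTheory, Finset.forall_mem_image]

end Fragments

theorem closedUnderRes_qhcond_compl (Q : Finset α) : ClosedUnderRes (QHcond Q Qᶜ) :=
  fun _ _ _ h hc hc' => QHcond.res_of_mem_union h hc hc' (by simp)

theorem hasQHPartition_iff_exists_compl {T : Finset (Clause α)} :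
    HasQHPartition T ↔ ∃ Q : Finset α, ∀ c ∈ T, QHcond Q Qᶜ c := by
  constructor
  · rintro ⟨Q, H, -, hcover, h⟩
    refine ⟨Q, fun c hc => (h c hc).mono subset_rfl fun q hq => ?_⟩
    obtain ⟨hqc, hqQ⟩ := Finset.mem_inter.1 hq
    have hqT : q ∈ Q ∪ H := hcover ▸ varsC_subset_varsT hc (posC_subset_varsC c hqc)
    exact Finset.mem_inter.2
      ⟨hqc, (Finset.mem_union.1 hqT).resolve_left (Finset.mem_compl.1 hqQ)⟩
  · rintro ⟨Q, h⟩
    refine ⟨Q ∩ varsT T, Qᶜ ∩ varsT T, ?_, ?_, fun c hc => (h c hc).mono ?_ ?_⟩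
    · rw [← Finset.inter_inter_distrib_right, Finset.inter_compl, Finset.empty_inter]
    · rw [← Finset.union_inter_distrib_right, Finset.union_compl, Finset.univ_inter]
    all_goals exact Finset.inter_subset_inter_left Finset.inter_subset_left

theorem isQHorn_iff {T : Finset (Clause α)} :
    IsQHorn T ↔ ∃ W Q : Finset α, ∀ c ∈ T, QHcond Q Qᶜ (renClause W c) := by
  simp only [IsQHorn, hasQHPartition_iff_exists_compl, renTheory, Finset.forall_mem_image]

end QHConditions

/-- If `Σ` is a Horn (resp. Krom, Horn renamable, q-Horn) theory,
then so is `unfold(Σ, V)`. -/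
theorem unfold_preserves_fragments
    (S : Finset (Clause α)) (hS : ∀ c ∈ S, IsClause c) (V : List α) :
    (IsHornTheory S → IsHornTheory (unfoldList S V)) ∧
    (IsKromTheory S → IsKromTheory (unfoldList S V)) ∧
    (IsRenHorn S → IsRenHorn (unfoldList S V)) ∧
    (IsQHorn S → IsQHorn (unfoldList S V)) := by
  refine ⟨fun h => closedUnderRes_hornClause.forall_mem_unfoldList h V, fun h => ?_, ?_, ?_⟩
  · have hkrom := closedUnderRes_isClause_and_card_le_two.forall_mem_unfoldList
      (fun c hc => ⟨hS c hc, h c hc⟩) V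
    exact fun c hc => (hkrom c hc).2
  · simp only [isRenHorn_iff]
    rintro ⟨W, h⟩
    exact ⟨W, (closedUnderRes_hornClause.comp_renClause W).forall_mem_unfoldList h V⟩
  · simp only [isQHorn_iff]
    rintro ⟨W, Q, h⟩
    exact ⟨W, Q, ((closedUnderRes_qhcond_compl Q).comp_renClause W).forall_mem_unfoldList h V⟩
end
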